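/- arXiv:2209.04664 — 2 statements merged into one kernel-verified Lean document; each statement's English description precedes it below -/
import Mathlib

section
/- Let S be a real symmetric d×d matrix of full rank with exactly m positive eigenvalues and f: ℝ^d → ℝ∪{+∞} a closed (lower semi-continuous) convex function such that min(f(x), f*(Sx)) ≥ ½S(x,x) for all x ∈ ℝ^d, where f* is the convex conjugate of f. Then the set G := {x ∈ ℝ^d : Sx ∈ ∂f(x)} is a maximal S-monotone set, and G = {x ∈ ℝ^d : f(x) = ½S(x,x)} = {x ∈ ℝ^d : f*(Sx) = ½S(x,x)}. -/
/-!
Write `q x = ½ S(x,x)` and `G = {x : Sx ∈ ∂f(x)}`. On `G`, Fenchel's equality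
`f x + f*(Sx) = 2 q x` together with `f ≥ q` and `f* ∘ S ≥ q` gives `f x = f*(Sx) = q x`.
Conversely, if `f x = q x` then the convex function `f` touches its smooth minorant `q` at `x`, so
`∇q(x) = Sx` is a subgradient (`touch`). The Fenchel-Young inequality
`S(x,z) ≤ f x + f*(Sz)` shows that a point `z` with `f*(Sz) = q z` is monotonically related to all
of `G`; in particular `G` is `S`-monotone.

It remains to prove that a point `y` monotonically related to all of `G` lies in `G`; applied to
the points with `f*(Sy) = q y`, this also yields the last equality without biconjugation.
Let `P = |S|` and `J = sign S`, so that `P = SJ` is positive definite and `J² = 1`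
(`exists_modulus`). Minimizing the coercive function `f(x) - S(x,y) + ½⟨x-y, P(x-y)⟩` produces `x`
such that, with `u = x - y` and `z = y - Ju`, the vector `Sz = Sy - Pu` lies in `∂f(x)`
(`exists_resolvent`). Then `q x + q z ≤ f x + f*(Sz) = S(x,z)`, that is, `q(x - z) ≤ 0`. But
`x - z = u + Ju` is fixed by `J`, where `S` coincides with `P`, so `x = z ∈ G` and `Ju = -u`.
Hence `S(u,u) = -⟨u, Pu⟩`, while `S(u,u) ≥ 0` by assumption, so `u = 0` and `y = x ∈ G`.

Coercivity needs only a lower bound of linear growth for `f`, which convexity yields from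
boundedness below on a ball (`linear_minorant`).
-/

open MeasureTheory Filter Set Matrix

noncomputable section

/-- The bilinear form of the matrix `S`: `S(x,y) = ⟨x, Sy⟩`. -/
def Sb {d : ℕ} (S : Matrix (Fin d) (Fin d) ℝ) (x y : Fin d → ℝ) : ℝ :=
  x ⬝ᵥ S.mulVec y

/-- A set `G` is `S`-monotone if `S(x-y,x-y) ≥ 0` for all `x, y ∈ G`. -/
def SMono {d : ℕ} (S : Matrix (Fin d) (Fin d) ℝ) (G : Set (Fin d → ℝ)) : Prop :=
  ∀ x ∈ G, ∀ y ∈ G, 0 ≤ Sb S (x - y) (x - y)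

/-- Maximal `S`-monotone set. -/
def MaxSMono {d : ℕ} (S : Matrix (Fin d) (Fin d) ℝ) (G : Set (Fin d → ℝ)) : Prop :=
  SMono S G ∧ ∀ H, SMono S H → G ⊆ H → H = G

/-- The Fitzpatrick function `ψ_G(y) = sup_{x∈G} (S(x,y) - S(x,x)/2)`, with values in
`ℝ ∪ {+∞}` (modeled in `EReal`). -/
def fitz {d : ℕ} (S : Matrix (Fin d) (Fin d) ℝ) (G : Set (Fin d → ℝ))
    (y : Fin d → ℝ) : EReal :=
  ⨆ x ∈ G, ((Sb S x y - Sb S x x / 2 : ℝ) : EReal)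

/-- Positive part of an extended real number, in `ℝ≥0∞`. -/
def epos (x : EReal) : ENNReal := if x = ⊤ then ⊤ else ENNReal.ofReal x.toReal

/-- Integral of an `EReal`-valued function: positive part minus negative part. -/
def eInt {α : Type*} [MeasurableSpace α] (μ : Measure α) (f : α → EReal) : EReal :=
  ((∫⁻ a, epos (f a) ∂μ : ENNReal) : EReal) - ((∫⁻ a, epos (-(f a)) ∂μ : ENNReal) : EReal)

/-- The martingale property of a measure `γ(dx,dy)` on `ℝ^d × ℝ^d`: the conditional
expectation of `y` given `x` equals `x`, `γ`-a.s. -/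
def MartProp {d : ℕ} (γ : Measure ((Fin d → ℝ) × (Fin d → ℝ))) : Prop :=
  γ[(fun p => p.2) | MeasurableSpace.comap Prod.fst inferInstance] =ᵐ[γ] fun p => p.1

/-- `γ ∈ Γ(ν)`: probability measures on `ℝ^d × ℝ^d` with finite second moment,
`y`-marginal `ν` and the martingale property. -/
def MGamma {d : ℕ} (ν : Measure (Fin d → ℝ))
    (γ : Measure ((Fin d → ℝ) × (Fin d → ℝ))) : Prop :=
  IsProbabilityMeasure γ ∧ γ.map Prod.snd = ν ∧
    Integrable (fun p => ‖p.1‖ ^ 2 + ‖p.2‖ ^ 2) γ ∧ MartProp γ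

/-- Value of the primal problem: `(1/2) ∫ S(x,y) dγ`. -/
def primalVal {d : ℕ} (S : Matrix (Fin d) (Fin d) ℝ)
    (γ : Measure ((Fin d → ℝ) × (Fin d → ℝ))) : ℝ :=
  (1 / 2) * ∫ p, Sb S p.1 p.2 ∂γ

/-- `γ` is an optimal plan for the primal problem. -/
def PrimalOpt {d : ℕ} (S : Matrix (Fin d) (Fin d) ℝ) (ν : Measure (Fin d → ℝ))
    (γ : Measure ((Fin d → ℝ) × (Fin d → ℝ))) : Prop :=
  MGamma ν γ ∧ ∀ γ', MGamma ν γ' → primalVal S γ' ≤ primalVal S γ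

/-- `G` is an optimal set for the dual problem: minimize `∫ ψ_G dν` over maximal
`S`-monotone sets. -/
def DualOpt {d : ℕ} (S : Matrix (Fin d) (Fin d) ℝ) (ν : Measure (Fin d → ℝ))
    (G : Set (Fin d → ℝ)) : Prop :=
  MaxSMono S G ∧ ∀ H, MaxSMono S H → eInt ν (fitz S G) ≤ eInt ν (fitz S H)

/-- The support of a measure: points all of whose neighborhoods have positive measure. -/
def msupp {α : Type*} [TopologicalSpace α] [MeasurableSpace α] (μ : Measure α) : Set α :=
  {x | ∀ U ∈ nhds x, μ U ≠ 0}

/-- The `S`-projection on `G`: minimizers over `G` of `z ↦ S(z-y,z-y)`. -/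
def SProj {d : ℕ} (S : Matrix (Fin d) (Fin d) ℝ) (G : Set (Fin d → ℝ))
    (y : Fin d → ℝ) : Set (Fin d → ℝ) :=
  {x ∈ G | ∀ z ∈ G, Sb S (x - y) (x - y) ≤ Sb S (z - y) (z - y)}

/-- The inverse image of the projection: `P_G^{-1}(x) = {y : x ∈ P_G(y)}`. -/
def SProjInv {d : ℕ} (S : Matrix (Fin d) (Fin d) ℝ) (G : Set (Fin d → ℝ))
    (x : Fin d → ℝ) : Set (Fin d → ℝ) :=
  {y | x ∈ SProj S G y}

/-- `Q_G(x) = ∪_{n ≥ 1} Q_G^{1/n}(x)`, where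
`Q_G^ε(x) = {y ∈ P_G^{-1}(x) : x + ε (x - y) ∈ P_G^{-1}(x)}`. -/
def QG {d : ℕ} (S : Matrix (Fin d) (Fin d) ℝ) (G : Set (Fin d → ℝ))
    (x : Fin d → ℝ) : Set (Fin d → ℝ) :=
  ⋃ n : ℕ, {y ∈ SProjInv S G x |
    x + ((1 : ℝ) / (n + 1)) • (x - y) ∈ SProjInv S G x}


/-- Convexity of an `EReal`-valued function on `ℝ^d`. -/
def EConvexOn {d : ℕ} (f : (Fin d → ℝ) → EReal) : Prop :=
  ∀ x y : Fin d → ℝ, ∀ t : ℝ, 0 < t → t < 1 →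
    f (t • x + (1 - t) • y) ≤ (t : EReal) * f x + ((1 - t : ℝ) : EReal) * f y

/-- The convex conjugate of an `EReal`-valued function on `ℝ^d`. -/
def econj {d : ℕ} (f : (Fin d → ℝ) → EReal) (y : Fin d → ℝ) : EReal :=
  ⨆ x : Fin d → ℝ, (((y ⬝ᵥ x : ℝ) : EReal) - f x)

/-- The subdifferential of an `EReal`-valued function on `ℝ^d`:
`∂f(x) = {z : f(y) - f(x) ≥ ⟨z, y - x⟩ for all y}`. -/
def esubdiff {d : ℕ} (f : (Fin d → ℝ) → EReal) (x : Fin d → ℝ) : Set (Fin d → ℝ) :=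
  {z | ∀ y : Fin d → ℝ, ((z ⬝ᵥ (y - x) : ℝ) : EReal) ≤ f y - f x}

/-! ### Linear algebra: the modulus of `S` and elementary bounds -/

/-- For every real symmetric invertible `S` there are a positive definite `P` (the modulus `|S|`)
and an involution `J` (the sign of `S`) with `P = S J`. -/
lemma exists_modulus {d : ℕ} (S : Matrix (Fin d) (Fin d) ℝ) (hS : S.IsHermitian)
    (hrank : IsUnit S.det) :
    ∃ J P : Matrix (Fin d) (Fin d) ℝ, P.PosDef ∧ P = S * J ∧ J * J = 1 := by
  set U : Matrix (Fin d) (Fin d) ℝ := (hS.eigenvectorUnitary : Matrix (Fin d) (Fin d) ℝ) with hU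
  have hUU : star U * U = 1 := Unitary.coe_star_mul_self hS.eigenvectorUnitary
  have hUU' : U * star U = 1 := Unitary.coe_mul_star_self hS.eigenvectorUnitary
  have hspec : S = U * diagonal hS.eigenvalues * star U := by
    have h := hS.spectral_theorem
    rw [Unitary.conjStarAlgAut_apply] at h
    exact h
  have hne : ∀ i, hS.eigenvalues i ≠ 0 := by
    have h := hrank.ne_zero
    rw [hS.det_eq_prod_eigenvalues] at h
    intro i hi
    exact h (Finset.prod_eq_zero (Finset.mem_univ i) (by simp [hi]))
  have hconj : ∀ a b : Fin d → ℝ, (U * diagonal a * star U) * (U * diagonal b * star U) =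
      U * diagonal (fun i => a i * b i) * star U := by
    intro a b
    rw [← diagonal_mul_diagonal]
    calc _ = U * diagonal a * (star U * U) * diagonal b * star U := by
          simp only [Matrix.mul_assoc]
      _ = _ := by rw [hUU]; simp only [Matrix.mul_assoc, Matrix.mul_one]
  refine ⟨U * diagonal (fun i => (SignType.sign (hS.eigenvalues i) : ℝ)) * star U,
    U * diagonal (fun i => |hS.eigenvalues i|) * star U, ?_, ?_, ?_⟩
  · refine (PosDef.diagonal fun i => abs_pos.2 (hne i)).mul_mul_conjTranspose_same ?_
    intro v w hvw
    have h := congrArg (fun z => z ᵥ* star U) hvw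
    simpa [Matrix.vecMul_vecMul, hUU'] using h
  · refine Eq.trans ?_ (congrArg (· * _) hspec.symm)
    rw [hconj]
    simp only [self_mul_sign]
  · rw [hconj]
    have : (fun i => (SignType.sign (hS.eigenvalues i) : ℝ) *
        (SignType.sign (hS.eigenvalues i) : ℝ)) = fun _ => 1 := by
      funext i
      rcases lt_or_gt_of_ne (hne i) with h | h <;> simp [h]
    rw [this, diagonal_one, Matrix.mul_one, hUU']

lemma symm_dot {d : ℕ} {A : Matrix (Fin d) (Fin d) ℝ} (hA : A.IsHermitian) (x y : Fin d → ℝ) :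
    x ⬝ᵥ A *ᵥ y = y ⬝ᵥ A *ᵥ x := by
  have hT : Aᵀ = A := hA
  rw [dotProduct_mulVec, ← hT, vecMul_transpose, dotProduct_comm, hT]

lemma posDef_lower_bound {d : ℕ} {P : Matrix (Fin d) (Fin d) ℝ} (hP : P.PosDef) :
    ∃ c > 0, ∀ x : Fin d → ℝ, c * ‖x‖ ^ 2 ≤ x ⬝ᵥ P *ᵥ x := by
  have hcont : Continuous fun x : Fin d → ℝ => x ⬝ᵥ P *ᵥ x := by fun_prop
  have hpos : ∀ x : Fin d → ℝ, x ≠ 0 → 0 < x ⬝ᵥ P *ᵥ x := fun x hx => by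
    simpa using hP.dotProduct_mulVec_pos hx
  rcases (Metric.sphere (0 : Fin d → ℝ) 1).eq_empty_or_nonempty with he | hne
  · refine ⟨1, one_pos, fun x => ?_⟩
    have hx : x = 0 := by
      by_contra hx
      have : (‖x‖⁻¹ • x) ∈ Metric.sphere (0 : Fin d → ℝ) 1 := by
        simp [norm_smul, inv_mul_cancel₀ (norm_ne_zero_iff.2 hx)]
      simp [he] at this
    simp [hx]
  · obtain ⟨e, he, hmin⟩ := (isCompact_sphere (0 : Fin d → ℝ) 1).exists_isMinOn hne
      hcont.continuousOn
    have he1 : ‖e‖ = 1 := by simpa using he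
    have he0 : e ≠ 0 := by
      rintro rfl
      simp at he1
    refine ⟨_, hpos e he0, fun x => ?_⟩
    rcases eq_or_ne x 0 with rfl | hx
    · simp
    · have hn : 0 < ‖x‖ := norm_pos_iff.2 hx
      have hmem : (‖x‖⁻¹ • x) ∈ Metric.sphere (0 : Fin d → ℝ) 1 := by
        simp [norm_smul, inv_mul_cancel₀ hn.ne']
      have h := hmin hmem
      simp only [mulVec_smul, smul_dotProduct, dotProduct_smul, smul_eq_mul,
        mem_ofPred_eq] at h
      calc _ ≤ (‖x‖⁻¹ * (‖x‖⁻¹ * (x ⬝ᵥ P *ᵥ x))) * ‖x‖ ^ 2 := by gcongr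
        _ = _ := by field_simp

lemma dot_linear_bound {d : ℕ} (w : Fin d → ℝ) :
    ∃ L, 0 ≤ L ∧ ∀ x : Fin d → ℝ, x ⬝ᵥ w ≤ L * ‖x‖ := by
  refine ⟨∑ i, |w i|, by positivity, fun x => ?_⟩
  rw [dotProduct, Finset.sum_mul]
  refine Finset.sum_le_sum fun i _ => ?_
  calc x i * w i ≤ |x i * w i| := le_abs_self _
    _ = |w i| * |x i| := by rw [abs_mul, mul_comm]
    _ ≤ |w i| * ‖x‖ := by
      gcongr
      exact norm_le_pi_norm x i

/-! ### Convex analysis: subgradients, growth and minimizers -/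

/-- A convex function dominating a quadratic function which it touches at `x₀` has the gradient of
that quadratic function as a subgradient at `x₀`; the quadratic form need not be nonnegative. -/
lemma touch {d : ℕ} {f : (Fin d → ℝ) → EReal} (hconv : EConvexOn f) (hbot : ∀ x, f x ≠ ⊥)
    (B : Matrix (Fin d) (Fin d) ℝ) (v x₀ : Fin d → ℝ) (a : ℝ) (ha : f x₀ = a)
    (h : ∀ x, ((a + v ⬝ᵥ (x - x₀) + (x - x₀) ⬝ᵥ B *ᵥ (x - x₀) : ℝ) : EReal) ≤ f x) :
    v ∈ esubdiff f x₀ := by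
  intro y
  rw [ha]
  induction hy : f y with
  | bot => exact absurd hy (hbot y)
  | top => simp
  | coe b =>
    rw [← EReal.coe_sub, EReal.coe_le_coe_iff]
    have key : ∀ t : ℝ, 0 < t → t < 1 →
        v ⬝ᵥ (y - x₀) + t * ((y - x₀) ⬝ᵥ B *ᵥ (y - x₀)) ≤ b - a := by
      intro t h0 h1
      have h2 := (h _).trans (hconv y x₀ t h0 h1)
      have e : t • y + (1 - t) • x₀ - x₀ = t • (y - x₀) := by
        module
      rw [hy, ha, e] at h2
      simp only [mulVec_smul, smul_dotProduct, dotProduct_smul, smul_eq_mul] at h2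
      rw [← EReal.coe_mul, ← EReal.coe_mul, ← EReal.coe_add, EReal.coe_le_coe_iff] at h2
      have h3 : t * (v ⬝ᵥ (y - x₀) + t * ((y - x₀) ⬝ᵥ B *ᵥ (y - x₀))) ≤ t * (b - a) := by
        linarith
      exact le_of_mul_le_mul_left h3 h0
    have hc : ContinuousWithinAt
        (fun t : ℝ => v ⬝ᵥ (y - x₀) + t * ((y - x₀) ⬝ᵥ B *ᵥ (y - x₀))) (Ioi 0) 0 := by
      fun_prop
    have hlim := hc.tendsto
    rw [zero_mul, add_zero] at hlim
    refine le_of_tendsto hlim ?_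
    filter_upwards [Ioo_mem_nhdsGT (zero_lt_one' ℝ)] with t ht
    exact key t ht.1 ht.2

/-- A proper lower semicontinuous convex function is bounded below on a ball around a point of its
domain, and convexity propagates this to a lower bound of linear growth. -/
lemma linear_minorant {d : ℕ} {f : (Fin d → ℝ) → EReal} (hconv : EConvexOn f)
    (hlsc : LowerSemicontinuous f) (hbot : ∀ x, f x ≠ ⊥) (x₁ : Fin d → ℝ) (a : ℝ)
    (ha : f x₁ = a) : ∃ C : ℝ, 0 ≤ C ∧ ∀ x, ((-C * (1 + ‖x‖) : ℝ) : EReal) ≤ f x := by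
  obtain ⟨e, he, hmin⟩ := LowerSemicontinuousOn.exists_isMinOn
    (Metric.nonempty_closedBall.2 (zero_le_one : (0 : ℝ) ≤ 1))
    (isCompact_closedBall x₁ 1) (hlsc.lowerSemicontinuousOn _)
  obtain ⟨M, hM0, hM⟩ : ∃ M : ℝ, 0 ≤ M ∧ ∀ x, ‖x - x₁‖ ≤ 1 → ((-M : ℝ) : EReal) ≤ f x := by
    have hle : f e ≤ a := ha ▸ hmin (Metric.mem_closedBall_self zero_le_one)
    lift f e to ℝ using ⟨fun h => by simp [h] at hle, hbot e⟩ with k hk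
    refine ⟨|k|, abs_nonneg _, fun x hx => ?_⟩
    refine le_trans ?_ (hmin (mem_closedBall_iff_norm.2 hx))
    rw [← hk, EReal.coe_le_coe_iff]
    exact neg_abs_le k
  refine ⟨(M + |a|) * (1 + ‖x₁‖), by positivity, fun x => ?_⟩
  have hxn : 1 + ‖x - x₁‖ ≤ (1 + ‖x₁‖) * (1 + ‖x‖) := by
    nlinarith [norm_sub_le x x₁, mul_nonneg (norm_nonneg x) (norm_nonneg x₁)]
  have hfin : -((M + |a|) * (1 + ‖x₁‖)) * (1 + ‖x‖) ≤ -(M + |a|) * (1 + ‖x - x₁‖) := by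
    nlinarith [mul_le_mul_of_nonneg_left hxn (by positivity : 0 ≤ M + |a|)]
  refine (EReal.coe_le_coe_iff.2 hfin).trans ?_
  rcases le_or_gt ‖x - x₁‖ 1 with h1 | h1
  · refine (EReal.coe_le_coe_iff.2 ?_).trans (hM x h1)
    nlinarith [abs_nonneg a, norm_nonneg (x - x₁),
      mul_nonneg (by positivity : 0 ≤ M + |a|) (norm_nonneg (x - x₁))]
  · induction hx : f x with
    | bot => exact absurd hx (hbot x)
    | top => simp
    | coe b =>
      rw [EReal.coe_le_coe_iff]
      have hr : 0 < ‖x - x₁‖ := by linarith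
      have h2 := hconv x x₁ ‖x - x₁‖⁻¹ (inv_pos.2 hr) (inv_lt_one_of_one_lt₀ h1)
      have hn : ‖‖x - x₁‖⁻¹ • x + (1 - ‖x - x₁‖⁻¹) • x₁ - x₁‖ ≤ 1 := by
        have : ‖x - x₁‖⁻¹ • x + (1 - ‖x - x₁‖⁻¹) • x₁ - x₁ = ‖x - x₁‖⁻¹ • (x - x₁) := by
          module
        rw [this, norm_smul, norm_inv, norm_norm, inv_mul_cancel₀ hr.ne']
      have h3 := (hM _ hn).trans h2
      rw [hx, ha, ← EReal.coe_mul, ← EReal.coe_mul, ← EReal.coe_add,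
        EReal.coe_le_coe_iff] at h3
      have h4 : ‖x - x₁‖ * -M ≤ b + (‖x - x₁‖ - 1) * a := by
        calc ‖x - x₁‖ * -M ≤ ‖x - x₁‖ * (‖x - x₁‖⁻¹ * b + (1 - ‖x - x₁‖⁻¹) * a) := by gcongr
          _ = _ := by field_simp
      nlinarith [mul_le_mul_of_nonneg_left (le_abs_self a) (by linarith : 0 ≤ ‖x - x₁‖ - 1),
        abs_nonneg a]

/-- Surjectivity of `∂f + P` for a positive definite `P`: the function `f + ½⟨x, Px⟩ - ⟨x, w⟩` is
lower semicontinuous and coercive, and `w - P x₀` is a subgradient of `f` at a minimizer `x₀`. -/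
lemma exists_resolvent {d : ℕ} {f : (Fin d → ℝ) → EReal} (hconv : EConvexOn f)
    (hlsc : LowerSemicontinuous f) (hbot : ∀ x, f x ≠ ⊥) (x₁ : Fin d → ℝ) (a : ℝ)
    (ha : f x₁ = a) {P : Matrix (Fin d) (Fin d) ℝ} (hP : P.PosDef) (w : Fin d → ℝ) :
    ∃ x₀, w - P *ᵥ x₀ ∈ esubdiff f x₀ := by
  obtain ⟨C, hC0, hC⟩ := linear_minorant hconv hlsc hbot x₁ a ha
  obtain ⟨c, hc0, hc⟩ := posDef_lower_bound hP
  obtain ⟨L, hL0, hL⟩ := dot_linear_bound w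
  set g : (Fin d → ℝ) → ℝ := fun x => x ⬝ᵥ P *ᵥ x / 2 - x ⬝ᵥ w with hg
  have hgc : Continuous g := by fun_prop
  have hF : LowerSemicontinuous fun x => f x + (g x : EReal) :=
    hlsc.add' (continuous_coe_real_ereal.comp hgc).lowerSemicontinuous fun x =>
      EReal.continuousAt_add (Or.inr (EReal.coe_ne_bot _)) (Or.inl (hbot x))
  set A := a + g x₁ with hA
  set R := (2 * C + L + |A| + 1) / (c / 2) + 1 with hR
  have hfar : ∀ x, R < ‖x‖ → (A : EReal) ≤ f x + (g x : EReal) := by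
    intro x hx
    refine le_trans ?_ (add_le_add_left (hC x) _)
    rw [← EReal.coe_add, EReal.coe_le_coe_iff]
    have hr1 : 1 ≤ ‖x‖ := by
      have : 0 ≤ (2 * C + L + |A| + 1) / (c / 2) := by positivity
      linarith
    have hr2 : 2 * C + L + |A| + 1 ≤ ‖x‖ * (c / 2) := by
      rw [← div_le_iff₀ (by positivity)]
      linarith
    have h1 := hc x
    have h2 := hL x
    have h3 := mul_le_mul_of_nonneg_left hr2 (norm_nonneg x)
    have h4 := le_abs_self A
    simp only [hg]
    nlinarith [mul_le_mul_of_nonneg_left hr1 hC0, mul_le_mul_of_nonneg_left hr1 (abs_nonneg A)]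
  obtain ⟨x₀, -, hmin⟩ := LowerSemicontinuousOn.exists_isMinOn
    (s := Metric.closedBall (0 : Fin d → ℝ) (max R ‖x₁‖)) ⟨x₁, by simp⟩
    (isCompact_closedBall _ _) (hF.lowerSemicontinuousOn _)
  have hle : f x₀ + (g x₀ : EReal) ≤ A := by
    have h := hmin (show x₁ ∈ Metric.closedBall (0 : Fin d → ℝ) (max R ‖x₁‖) by simp)
    simpa [ha, hA] using h
  have hglob : ∀ x, f x₀ + (g x₀ : EReal) ≤ f x + (g x : EReal) := by
    intro x
    rcases le_or_gt ‖x‖ (max R ‖x₁‖) with h | h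
    · exact hmin (show x ∈ Metric.closedBall (0 : Fin d → ℝ) (max R ‖x₁‖) by simpa using h)
    · exact hle.trans (hfar x ((le_max_left _ _).trans_lt h))
  have htop : f x₀ ≠ ⊤ := by
    intro h
    rw [h, EReal.top_add_coe] at hle
    exact absurd hle (by simp)
  refine ⟨x₀, ?_⟩
  obtain ⟨b, hb⟩ : ∃ b : ℝ, f x₀ = b := ⟨_, (EReal.coe_toReal htop (hbot x₀)).symm⟩
  refine touch hconv hbot (-(1 / 2 : ℝ) • P) _ x₀ b hb fun x => ?_
  have h := hglob x
  induction hx : f x with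
  | bot => exact absurd hx (hbot x)
  | top => simp
  | coe k =>
    rw [hx, hb, ← EReal.coe_add, ← EReal.coe_add, EReal.coe_le_coe_iff] at h
    rw [EReal.coe_le_coe_iff]
    have hs := symm_dot hP.1 x x₀
    simp only [hg] at h
    simp only [sub_dotProduct, dotProduct_sub, mulVec_sub, smul_mulVec, dotProduct_smul,
      smul_eq_mul]
    rw [dotProduct_comm w x, dotProduct_comm w x₀, dotProduct_comm (P *ᵥ x₀) x,
      dotProduct_comm (P *ᵥ x₀) x₀]
    linarith

/-- Fenchel's equality on the graph of the subdifferential. -/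
lemma fenchel_eq {d : ℕ} {f : (Fin d → ℝ) → EReal} (hbot : ∀ x, f x ≠ ⊥) {x₁ : Fin d → ℝ} {a : ℝ}
    (ha : f x₁ = a) {x v : Fin d → ℝ} (hv : v ∈ esubdiff f x) :
    ∃ b : ℝ, f x = b ∧ econj f v = ((v ⬝ᵥ x - b : ℝ) : EReal) := by
  have htop : f x ≠ ⊤ := by
    intro h
    have := hv x₁
    rw [h, ha, EReal.sub_top, le_bot_iff] at this
    exact EReal.coe_ne_bot _ this
  obtain ⟨b, hb⟩ : ∃ b : ℝ, f x = b := ⟨_, (EReal.coe_toReal htop (hbot x)).symm⟩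
  refine ⟨b, hb, le_antisymm (iSup_le fun y => ?_) ?_⟩
  · have h := hv y
    rw [hb] at h
    induction hy : f y with
    | bot => exact absurd hy (hbot y)
    | top => simp
    | coe k =>
      rw [hy, ← EReal.coe_sub, EReal.coe_le_coe_iff, dotProduct_sub] at h
      rw [← EReal.coe_sub, EReal.coe_le_coe_iff]
      linarith
  · rw [EReal.coe_sub, ← hb]
    exact le_iSup (fun y => ((v ⬝ᵥ y : ℝ) : EReal) - f y) x

lemma Sb_sub_self {d : ℕ} {S : Matrix (Fin d) (Fin d) ℝ} (hS : S.IsHermitian)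
    (x y : Fin d → ℝ) : Sb S (x - y) (x - y) = Sb S x x + Sb S y y - 2 * Sb S x y := by
  have h := symm_dot hS x y
  simp only [Sb, sub_dotProduct, dotProduct_sub, mulVec_sub]
  linarith

/-! ### Maximal monotonicity of `G` -/

/-- Theorem 11: if `f : ℝ^d → ℝ ∪ {+∞}` is a closed convex function
with `min(f(x), f*(Sx)) ≥ ½S(x,x)` for all `x`, then `G := {x : Sx ∈ ∂f(x)}` is maximal
`S`-monotone, and `G = {x : f(x) = ½S(x,x)} = {x : f*(Sx) = ½S(x,x)}`. -/
theorem maximal_monotone_from_convex_function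
    (d m : ℕ) (S : Matrix (Fin d) (Fin d) ℝ) (hS : S.IsHermitian)
    (hrank : IsUnit S.det)
    (hm : Nat.card {i : Fin d // 0 < hS.eigenvalues i} = m)
    (f : (Fin d → ℝ) → EReal)
    (hconv : EConvexOn f) (hlsc : LowerSemicontinuous f) (hbot : ∀ x, f x ≠ ⊥)
    (hmin : ∀ x : Fin d → ℝ,
      ((Sb S x x / 2 : ℝ) : EReal) ≤ f x ∧
      ((Sb S x x / 2 : ℝ) : EReal) ≤ econj f (S.mulVec x)) :
    MaxSMono S {x | S.mulVec x ∈ esubdiff f x} ∧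
    {x | S.mulVec x ∈ esubdiff f x} = {x | f x = ((Sb S x x / 2 : ℝ) : EReal)} ∧
    {x | S.mulVec x ∈ esubdiff f x} =
      {x | econj f (S.mulVec x) = ((Sb S x x / 2 : ℝ) : EReal)} := by
  have hsy : ∀ x y, Sb S x y = Sb S y x := symm_dot hS
  obtain ⟨x₁, a, ha⟩ : ∃ x₁, ∃ a : ℝ, f x₁ = a := by
    by_contra! hcon
    have htop : ∀ x, f x = ⊤ := fun x => by
      by_contra h
      exact hcon x _ (EReal.coe_toReal h (hbot x)).symm
    have h := (hmin 0).2
    simp [econj, htop] at h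
  -- If `Sz` is a subgradient at `x`, Fenchel's equality reads `f x + f* (Sz) = S(x,z)`.
  have hsub : ∀ x z, S *ᵥ z ∈ esubdiff f x → ∃ b : ℝ, f x = b ∧
      econj f (S *ᵥ z) = ((Sb S x z - b : ℝ) : EReal) ∧ Sb S x x / 2 ≤ b ∧
      Sb S z z / 2 ≤ Sb S x z - b := by
    intro x z hz
    obtain ⟨b, hb, hc⟩ := fenchel_eq hbot ha hz
    rw [dotProduct_comm] at hc
    have h1 := (hmin x).1
    have h2 := (hmin z).2
    rw [hb, EReal.coe_le_coe_iff] at h1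
    rw [hc, EReal.coe_le_coe_iff] at h2
    exact ⟨b, hb, hc, h1, h2⟩
  have hmem : ∀ x, S *ᵥ x ∈ esubdiff f x → f x = ((Sb S x x / 2 : ℝ) : EReal) ∧
      econj f (S *ᵥ x) = ((Sb S x x / 2 : ℝ) : EReal) := by
    intro x hx
    obtain ⟨b, hb, hc, h1, h2⟩ := hsub x x hx
    have : b = Sb S x x / 2 := by linarith
    subst this
    refine ⟨hb, ?_⟩
    rw [hc]
    congr 1
    ring
  have hof : ∀ x, f x = ((Sb S x x / 2 : ℝ) : EReal) → S *ᵥ x ∈ esubdiff f x := by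
    intro x hx
    refine touch hconv hbot ((1 / 2 : ℝ) • S) _ x _ hx fun y => ?_
    refine le_trans (EReal.coe_le_coe_iff.2 (le_of_eq ?_)) (hmin y).1
    have h := Sb_sub_self hS y x
    have h' : (y - x) ⬝ᵥ S *ᵥ (y - x) = Sb S (y - x) (y - x) := rfl
    have h1 : y ⬝ᵥ S *ᵥ x = Sb S y x := rfl
    have h2 : x ⬝ᵥ S *ᵥ x = Sb S x x := rfl
    rw [smul_mulVec, dotProduct_smul, smul_eq_mul, h', h, dotProduct_comm, sub_dotProduct, h1, h2]
    ring
  -- The Fenchel-Young inequality at a point of `G`.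
  have hFY : ∀ x z, S *ᵥ x ∈ esubdiff f x →
      econj f (S *ᵥ z) = ((Sb S z z / 2 : ℝ) : EReal) → 0 ≤ Sb S (x - z) (x - z) := by
    intro x z hx hz
    have h : ((S *ᵥ z ⬝ᵥ x : ℝ) : EReal) - f x ≤ econj f (S *ᵥ z) :=
      le_iSup (fun y => ((S *ᵥ z ⬝ᵥ y : ℝ) : EReal) - f y) x
    rw [(hmem x hx).1, hz, ← EReal.coe_sub, EReal.coe_le_coe_iff, dotProduct_comm] at h
    have h' : x ⬝ᵥ S *ᵥ z = Sb S x z := rfl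
    rw [h'] at h
    rw [Sb_sub_self hS]
    linarith
  have hmax : ∀ y, (∀ x, S *ᵥ x ∈ esubdiff f x → 0 ≤ Sb S (x - y) (x - y)) →
      S *ᵥ y ∈ esubdiff f y := by
    intro y hy
    obtain ⟨J, P, hP, hPS, hJ⟩ := exists_modulus S hS hrank
    have hSJ : ∀ x, S *ᵥ (J *ᵥ x) = P *ᵥ x := fun x => by rw [mulVec_mulVec, hPS]
    have hJJ : ∀ x, J *ᵥ (J *ᵥ x) = x := fun x => by rw [mulVec_mulVec, hJ, one_mulVec]
    have hpos : ∀ x : Fin d → ℝ, x ⬝ᵥ P *ᵥ x ≤ 0 → x = 0 := fun x hx => by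
      by_contra h
      have := hP.dotProduct_mulVec_pos h
      rw [star_trivial] at this
      linarith
    obtain ⟨x, hx⟩ := exists_resolvent hconv hlsc hbot x₁ a ha hP (S *ᵥ y + P *ᵥ y)
    set u := x - y with hu
    have hz : S *ᵥ y + P *ᵥ y - P *ᵥ x = S *ᵥ (y - J *ᵥ u) := by
      rw [mulVec_sub, hSJ, hu, mulVec_sub]
      abel
    rw [hz] at hx
    obtain ⟨b, -, -, h1, h2⟩ := hsub _ _ hx
    have h3 := Sb_sub_self hS x (y - J *ᵥ u)
    have hw : x - (y - J *ᵥ u) = u + J *ᵥ u := by rw [hu]; abel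
    -- `u + Ju` is fixed by `J`, so `S` and `P = SJ` agree on it.
    have hSw : S *ᵥ (u + J *ᵥ u) = P *ᵥ (u + J *ᵥ u) := by
      rw [← hSJ, mulVec_add J, hJJ, add_comm]
    have hw0 : u + J *ᵥ u = 0 := by
      apply hpos
      rw [← hSw]
      rw [hw] at h3
      change Sb S (u + J *ᵥ u) (u + J *ᵥ u) ≤ 0
      linarith
    have hzx : y - J *ᵥ u = x := by
      rw [← hw] at hw0
      exact (sub_eq_zero.1 hw0).symm
    rw [hzx] at hx
    have hyx := hy x hx
    -- Here `Ju = -u`, so `S(u,u) = -⟨u, Pu⟩`, which monotonicity forces to vanish.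
    have hu0 : u = 0 := by
      apply hpos
      rw [← hSJ, eq_neg_of_add_eq_zero_right hw0, mulVec_neg, dotProduct_neg]
      exact neg_nonpos.2 hyx
    rw [← sub_eq_zero.1 hu0]
    exact hx
  refine ⟨⟨fun x hx y hy => hFY x y hx (hmem y hy).2, fun H hH hGH => ?_⟩, ?_, ?_⟩
  · exact Subset.antisymm (fun y hy => hmax y fun x hx => hH x (hGH hx) y hy) hGH
  · exact Subset.antisymm (fun x hx => (hmem x hx).1) hof
  · exact Subset.antisymm (fun x hx => (hmem x hx).2) fun z hz => hmax z fun x hx => hFY x z hx hz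

end
end

section
/- Let S be a real symmetric d×d matrix of full rank with exactly m positive eigenvalues and G a maximal S-monotone set. Then the Fitzpatrick function ψ_G is a closed convex function on ℝ^d with values in ℝ∪{+∞} satisfying ψ_G*(Sx) ≥ ψ_G(x) ≥ ½S(x,x) for all x ∈ ℝ^d. Moreover, for every x ∈ ℝ^d the following are equivalent: x ∈ G; Sx ∈ ∂ψ_G(x); x ∈ ∂ψ_G*(Sx); ψ_G(x) = ½S(x,x); ψ_G*(Sx) = ½S(x,x). -/
/-!
Write `q x = S(x,x)/2`. Since `S(x,y) - q x = q y - q (x - y)`, the inequality `ψ_G y ≤ q y` says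
that `q (x - y) ≥ 0` for every `x ∈ G`, which by maximality means `y ∈ G`
(`fitz_le_iff`). Hence `ψ_G ≥ q` everywhere, with equality exactly on `G`.

Restricting the supremum defining `ψ_G*(Sx)` to `G`, where `ψ_G = q`, gives `ψ_G*(Sx) ≥ ψ_G x`;
and for `x ∈ G` the bound `ψ_G y ≥ S(x,y) - q x` gives `ψ_G*(Sx) ≤ q x`. Each of the two
subdifferential conditions, tested only against points `y ∈ G` (where `ψ_G y = ψ_G*(Sy) = q y`),
yields `ψ_G x ≤ 2 q x - c` with `c = ψ_G x` or `c = ψ_G*(Sx)`. As `c ≥ q x`, this forces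
`ψ_G x ≤ q x`, that is, `x ∈ G`. No biconjugation theorem is needed.
-/

open MeasureTheory Filter Set Matrix

noncomputable section

section Fitzpatrick

variable {d : ℕ} {S : Matrix (Fin d) (Fin d) ℝ} {G : Set (Fin d → ℝ)}

lemma Sb_symm (hS : S.IsHermitian) (x y : Fin d → ℝ) : Sb S x y = Sb S y x := by
  have hT : Sᵀ = S := by simpa using hS.eq
  unfold Sb
  rw [Matrix.dotProduct_mulVec, ← Matrix.mulVec_transpose, hT, dotProduct_comm]

lemma Sb_sub_sub (hS : S.IsHermitian) (x y : Fin d → ℝ) :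
    Sb S (x - y) (x - y) = Sb S x x - 2 * Sb S x y + Sb S y y := by
  have h := Sb_symm hS x y
  simp only [Sb, Matrix.mulVec_sub, sub_dotProduct, dotProduct_sub] at *
  linarith

lemma mulVec_dotProduct_eq (hS : S.IsHermitian) (x y : Fin d → ℝ) :
    S.mulVec x ⬝ᵥ y = Sb S x y := by
  rw [Sb_symm hS, dotProduct_comm, Sb]

lemma le_fitz {x : Fin d → ℝ} (hx : x ∈ G) (y : Fin d → ℝ) :
    ((Sb S x y - Sb S x x / 2 : ℝ) : EReal) ≤ fitz S G y :=
  le_iSup₂_of_le x hx le_rfl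

/-- Maximality turns `q (x - y) ≥ 0` for all `x ∈ G` into `y ∈ G`. -/
lemma fitz_le_iff (hS : S.IsHermitian) (hG : MaxSMono S G) (y : Fin d → ℝ) :
    fitz S G y ≤ ((Sb S y y / 2 : ℝ) : EReal) ↔ y ∈ G := by
  simp only [fitz, iSup_le_iff, EReal.coe_le_coe_iff]
  constructor
  · intro h
    have key : ∀ x ∈ G, 0 ≤ Sb S (x - y) (x - y) := fun x hx => by
      rw [Sb_sub_sub hS]; linarith [h x hx]
    have hins : SMono S (insert y G) := by
      rintro a (rfl | ha) b (rfl | hb)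
      · simp [Sb]
      · have := key b hb
        rw [Sb_sub_sub hS] at this ⊢
        linarith [Sb_symm hS a b]
      · exact key a ha
      · exact hG.1 a ha b hb
    rw [← hG.2 _ hins (Set.subset_insert y G)]
    exact Set.mem_insert y G
  · intro hy x hx
    have := hG.1 x hx y hy
    rw [Sb_sub_sub hS] at this
    linarith

lemma half_le_fitz (hS : S.IsHermitian) (hG : MaxSMono S G) (y : Fin d → ℝ) :
    ((Sb S y y / 2 : ℝ) : EReal) ≤ fitz S G y := by
  rcases le_total (fitz S G y) ((Sb S y y / 2 : ℝ) : EReal) with h | h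
  · refine le_trans (le_of_eq ?_) (le_fitz ((fitz_le_iff hS hG y).1 h) y)
    congr 1; ring
  · exact h

lemma fitz_eq_iff (hS : S.IsHermitian) (hG : MaxSMono S G) (y : Fin d → ℝ) :
    y ∈ G ↔ fitz S G y = ((Sb S y y / 2 : ℝ) : EReal) := by
  rw [← fitz_le_iff hS hG y]
  exact ⟨fun h => le_antisymm h (half_le_fitz hS hG y), fun h => h.le⟩

lemma fitz_le_econj (hS : S.IsHermitian) (hG : MaxSMono S G) (x : Fin d → ℝ) :
    fitz S G x ≤ econj (fitz S G) (S.mulVec x) := by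
  refine iSup₂_le fun y hy => le_trans (le_of_eq ?_) (le_iSup _ y)
  rw [(fitz_eq_iff hS hG y).1 hy, mulVec_dotProduct_eq hS, Sb_symm hS x y, EReal.coe_sub]

lemma econj_eq_iff (hS : S.IsHermitian) (hG : MaxSMono S G) (x : Fin d → ℝ) :
    x ∈ G ↔ econj (fitz S G) (S.mulVec x) = ((Sb S x x / 2 : ℝ) : EReal) := by
  constructor
  · intro hx
    refine le_antisymm (iSup_le fun y => ?_)
      ((half_le_fitz hS hG x).trans (fitz_le_econj hS hG x))
    refine (EReal.sub_le_sub le_rfl (le_fitz hx y)).trans (le_of_eq ?_)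
    rw [mulVec_dotProduct_eq hS, ← EReal.coe_sub]
    congr 1; ring
  · intro h
    exact (fitz_le_iff hS hG x).1 (h ▸ fitz_le_econj hS hG x)

/-- The common end of both subdifferential arguments: `S(x, y - x) ≤ q y - c` on `G` with
`c ≥ q x` gives `ψ_G x ≤ 2 q x - c ≤ q x`. The value `c = ⊤` needs no separate treatment: the hypothesis is
used only after `c` has been replaced by the finite number `q x`. -/
lemma mem_of_forall_le_sub (hS : S.IsHermitian) (hG : MaxSMono S G) {x : Fin d → ℝ} {c : EReal}
    (hc : ((Sb S x x / 2 : ℝ) : EReal) ≤ c)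
    (h : ∀ y ∈ G, ((Sb S x y - Sb S x x : ℝ) : EReal) ≤ ((Sb S y y / 2 : ℝ) : EReal) - c) :
    x ∈ G := by
  rw [← fitz_le_iff hS hG]
  refine iSup₂_le fun y hy => ?_
  have h1 := (h y hy).trans (EReal.sub_le_sub le_rfl hc)
  rw [← EReal.coe_sub, EReal.coe_le_coe_iff] at h1
  rw [EReal.coe_le_coe_iff, Sb_symm hS y x]
  linarith

lemma mem_iff_mem_esubdiff (hS : S.IsHermitian) (hG : MaxSMono S G) (x : Fin d → ℝ) :
    x ∈ G ↔ S.mulVec x ∈ esubdiff (fitz S G) x := by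
  constructor
  · intro hx y
    rw [(fitz_eq_iff hS hG x).1 hx]
    refine le_trans (le_of_eq ?_) (EReal.sub_le_sub (le_fitz hx y) le_rfl)
    rw [← EReal.coe_sub, dotProduct_sub, mulVec_dotProduct_eq hS, mulVec_dotProduct_eq hS]
    congr 1; ring
  · intro h
    refine mem_of_forall_le_sub hS hG (half_le_fitz hS hG x) fun y hy => ?_
    have := h y
    rwa [(fitz_eq_iff hS hG y).1 hy, dotProduct_sub, mulVec_dotProduct_eq hS,
      mulVec_dotProduct_eq hS] at this

lemma mem_iff_mem_esubdiff_econj (hS : S.IsHermitian) (hG : MaxSMono S G) (x : Fin d → ℝ) :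
    x ∈ G ↔ x ∈ esubdiff (econj (fitz S G)) (S.mulVec x) := by
  constructor
  · intro hx v
    have hv : ((v ⬝ᵥ x : ℝ) : EReal) - fitz S G x ≤ econj (fitz S G) v :=
      le_iSup (fun z => ((v ⬝ᵥ z : ℝ) : EReal) - fitz S G z) x
    rw [(econj_eq_iff hS hG x).1 hx]
    rw [(fitz_eq_iff hS hG x).1 hx] at hv
    refine le_trans (le_of_eq ?_) (EReal.sub_le_sub hv le_rfl)
    rw [← EReal.coe_sub, ← EReal.coe_sub, dotProduct_sub, dotProduct_comm v x]
    congr 1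
    unfold Sb; ring
  · intro h
    refine mem_of_forall_le_sub hS hG
      ((half_le_fitz hS hG x).trans (fitz_le_econj hS hG x)) fun y hy => ?_
    have := h (S.mulVec y)
    rwa [(econj_eq_iff hS hG y).1 hy, dotProduct_sub] at this

lemma fitz_convex : EConvexOn (fitz S G) := by
  intro x y t ht0 ht1
  refine iSup₂_le fun z hz => ?_
  have e : Sb S z (t • x + (1 - t) • y) - Sb S z z / 2
      = t * (Sb S z x - Sb S z z / 2) + (1 - t) * (Sb S z y - Sb S z z / 2) := by
    simp only [Sb, Matrix.mulVec_add, Matrix.mulVec_smul, dotProduct_add, dotProduct_smul,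
      smul_eq_mul]
    ring
  rw [e, EReal.coe_add, EReal.coe_mul, EReal.coe_mul]
  exact add_le_add
    (mul_le_mul_of_nonneg_left (le_fitz hz x) (EReal.coe_nonneg.2 ht0.le))
    (mul_le_mul_of_nonneg_left (le_fitz hz y) (EReal.coe_nonneg.2 (sub_nonneg.2 ht1.le)))

lemma fitz_lowerSemicontinuous : LowerSemicontinuous (fitz S G) := by
  refine lowerSemicontinuous_biSup fun z _ => Continuous.lowerSemicontinuous ?_
  refine continuous_coe_real_ereal.comp ?_
  unfold Sb
  fun_prop

end Fitzpatrick

/-- Theorem 12: the Fitzpatrick function `ψ_G` of a maximal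
`S`-monotone set `G` is closed convex with values in `ℝ ∪ {+∞}`,
`ψ_G*(Sx) ≥ ψ_G(x) ≥ ½S(x,x)`, and the five conditions `x ∈ G`, `Sx ∈ ∂ψ_G(x)`,
`x ∈ ∂ψ_G*(Sx)`, `ψ_G(x) = ½S(x,x)`, `ψ_G*(Sx) = ½S(x,x)` are equivalent. -/
theorem fitzpatrick_properties
    (d m : ℕ) (S : Matrix (Fin d) (Fin d) ℝ) (hS : S.IsHermitian)
    (hrank : IsUnit S.det)
    (hm : Nat.card {i : Fin d // 0 < hS.eigenvalues i} = m)
    (G : Set (Fin d → ℝ)) (hG : MaxSMono S G) :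
    EConvexOn (fitz S G) ∧ LowerSemicontinuous (fitz S G) ∧
    (∀ x, fitz S G x ≠ ⊥) ∧
    (∀ x : Fin d → ℝ,
      ((Sb S x x / 2 : ℝ) : EReal) ≤ fitz S G x ∧
      fitz S G x ≤ econj (fitz S G) (S.mulVec x)) ∧
    (∀ x : Fin d → ℝ,
      (x ∈ G ↔ S.mulVec x ∈ esubdiff (fitz S G) x) ∧
      (x ∈ G ↔ x ∈ esubdiff (econj (fitz S G)) (S.mulVec x)) ∧
      (x ∈ G ↔ fitz S G x = ((Sb S x x / 2 : ℝ) : EReal)) ∧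
      (x ∈ G ↔ econj (fitz S G) (S.mulVec x) = ((Sb S x x / 2 : ℝ) : EReal))) := by
  refine ⟨fitz_convex, fitz_lowerSemicontinuous, fun x hx => ?_,
    fun x => ⟨half_le_fitz hS hG x, fitz_le_econj hS hG x⟩,
    fun x => ⟨mem_iff_mem_esubdiff hS hG x, mem_iff_mem_esubdiff_econj hS hG x,
      fitz_eq_iff hS hG x, econj_eq_iff hS hG x⟩⟩
  have h := half_le_fitz hS hG x
  rw [hx, le_bot_iff] at h
  exact EReal.coe_ne_bot _ h

end
end
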